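/- Let n, k, l, m be natural numbers with n ≥ 1, 2 ≤ m ≤ l, and let α = m/l. Then, as rational numbers, (1/(m+1))·(m·n + k·C(m, 2) − (k/α)·C(m+1, 2)) ≥ (n − k/α)/2 if and only if k/n ≤ α/(m(1−α)+1) = m/(m(l−m)+l). (Here C(m, 2) = m(m−1)/2, C(m+1, 2) = m(m+1)/2, and k/α = k·l/m.) In particular, if the rate R = k/n of the Reed–Solomon code RS(q^l, n, k) satisfies R ≤ m/(m(l−m)+l), the virtual-projection radius τ_{P_α} is at least the α-decoding radius τ_α = (n − k/α)/2. -/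

import Mathlib

/-!
Write `D = m(l − m) + l`, which is positive because `m ≤ l`. Substituting `α = m/l` gives
`α/(m(1−α)+1) = m/D`, and the difference of the two radii factors as
`(m − 1)/(2m(m + 1)) · (m·n − k·D)`. The first factor is positive for `m ≥ 2`, so the comparison
of the radii amounts to `k·D ≤ m·n`, that is, to `k/n ≤ m/D`.
-/

/-- for `n ≥ 1`, `2 ≤ m ≤ l`, and `α = m/l`, the virtual-projection radius
`τ_{P_α} = (1/(m+1))·(m·n + k·C(m,2) − (k/α)·C(m+1,2))` is at least the `α`-decoding
radius `τ_α = (n − k/α)/2` if and only if the rate satisfies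
`k/n ≤ α/(m(1−α)+1) = m/(m(l−m)+l)`. -/
theorem radius_beyond_iff_rate
    (n k l m : ℕ) (hn : 1 ≤ n) (hm : 2 ≤ m) (hml : m ≤ l)
    (α : ℚ) (hα : α = (m : ℚ) / l) :
    ((1 / ((m : ℚ) + 1)) *
        ((m : ℚ) * n + (k : ℚ) * (Nat.choose m 2 : ℚ) -
          ((k : ℚ) / α) * (Nat.choose (m + 1) 2 : ℚ)) ≥
      ((n : ℚ) - (k : ℚ) / α) / 2 ↔
      (k : ℚ) / n ≤ α / ((m : ℚ) * (1 - α) + 1)) ∧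
    α / ((m : ℚ) * (1 - α) + 1) = (m : ℚ) / ((m : ℚ) * ((l : ℚ) - m) + l) := by
  have hn' : (0 : ℚ) < n := by exact_mod_cast hn
  have hm' : (2 : ℚ) ≤ m := by exact_mod_cast hm
  have hml' : (m : ℚ) ≤ l := by exact_mod_cast hml
  have hm0 : (0 : ℚ) < m := by linarith
  have hl0 : (0 : ℚ) < l := by linarith
  have hD : (0 : ℚ) < (m : ℚ) * ((l : ℚ) - m) + l := by
    have := mul_nonneg hm0.le (sub_nonneg.mpr hml')
    linarith
  have hrate : α / ((m : ℚ) * (1 - α) + 1) = (m : ℚ) / ((m : ℚ) * ((l : ℚ) - m) + l) := by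
    have hden : (m : ℚ) * (1 - α) + 1 = ((m : ℚ) * ((l : ℚ) - m) + l) / l := by
      rw [hα]
      field_simp
    rw [hden, hα, div_div_div_cancel_right₀ hl0.ne']
  refine ⟨?_, hrate⟩
  have hdiff : (1 / ((m : ℚ) + 1)) *
        ((m : ℚ) * n + (k : ℚ) * (Nat.choose m 2 : ℚ) -
          ((k : ℚ) / α) * (Nat.choose (m + 1) 2 : ℚ)) - ((n : ℚ) - (k : ℚ) / α) / 2 =
      ((m : ℚ) - 1) / (2 * m * (m + 1)) *
        ((m : ℚ) * n - k * ((m : ℚ) * ((l : ℚ) - m) + l)) := by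
    rw [Nat.cast_choose_two, Nat.cast_choose_two, hα]
    push_cast
    field_simp
    ring
  have hc : (0 : ℚ) < ((m : ℚ) - 1) / (2 * m * (m + 1)) :=
    div_pos (by linarith) (by positivity)
  rw [hrate, div_le_div_iff₀ hn' hD, ge_iff_le, ← sub_nonneg, hdiff,
    mul_nonneg_iff_of_pos_left hc, sub_nonneg]
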